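/- arXiv:1210.7110 — 7 statements merged into one kernel-verified Lean document; each statement's English description precedes it below -/
import Mathlib

section
/- For all smooth vector fields X, Y : ℝ³ → ℝ³ and all p ∈ ℝ³, the torsion of the adapted covariant derivative satisfies ∇̄_X Y(p) − ∇̄_Y X(p) − [X,Y](p) = −(X(p)₁·Y(p)₂ − X(p)₂·Y(p)₁)·e₀(p); that is, the torsion tensor of ∇̄ equals −e¹∧e² ⊗ e₀ = de⁰ ⊗ e₀. -/
open Real MeasureTheory

noncomputable section

/-- The Heisenberg group `ℍ¹` in exponential coordinates, as `ℝ³`. -/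
abbrev H3 : Type := Fin 3 → ℝ

/-- Left invariant vector field `e₀`. -/
def E0 : H3 → H3 := fun _ => ![0, 0, 1]

/-- Left invariant vector field `e₁`. -/
def E1 : H3 → H3 := fun p => ![1, 0, -p 1 / 2]

/-- Left invariant vector field `e₂`. -/
def E2 : H3 → H3 := fun p => ![0, 1, p 0 / 2]

/-- Dual coframe element `e⁰` (the contact form). -/
def e0' (p v : H3) : ℝ := v 2 + (p 1 * v 0 - p 0 * v 1) / 2

/-- Dual coframe element `e¹`. -/
def e1' (_p v : H3) : ℝ := v 0

/-- Dual coframe element `e²`. -/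
def e2' (_p v : H3) : ℝ := v 1

/-- Lie bracket of vector fields on `ℝ³`. -/
def lie (V W : H3 → H3) (p : H3) : H3 :=
  fderiv ℝ W p (V p) - fderiv ℝ V p (W p)

/-- The adapted covariant derivative `∇̄_X Y`, for which the left invariant
frame `e₀, e₁, e₂` is parallel. -/
def nablaBar (X Y : H3 → H3) (p : H3) : H3 :=
  fderiv ℝ (fun q => e0' q (Y q)) p (X p) • E0 p
  + fderiv ℝ (fun q => Y q 0) p (X p) • E1 p
  + fderiv ℝ (fun q => Y q 1) p (X p) • E2 p

/-!
A frame `e` with dual coframe `θ` carries a unique connection for which `e` is parallel, namely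
`∇_X Y = ∑ i, X(θ i Y) • e i`. Expanding `[X, Y]` in the frame and applying Cartan's formula
`dθ(X, Y) = X(θ Y) - Y(θ X) - θ [X, Y]` to each `θ i` shows that its torsion is `∑ i, dθ i ⊗ e i`.
In the Heisenberg coframe `e¹` and `e²` are exact, so only `de⁰ ⊗ e₀` survives.
-/

section ParallelFrame

open VectorField

variable {𝕜 E F ι : Type*} [NontriviallyNormedField 𝕜] [NormedAddCommGroup E] [NormedSpace 𝕜 E]
  [NormedAddCommGroup F] [NormedSpace 𝕜 F]

lemma extDeriv_const {n : ℕ} (ω : E [⋀^Fin n]→L[𝕜] F) (p : E) :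
    extDeriv (fun _ => ω) p = 0 := by
  rw [extDeriv, fderiv_fun_const]
  exact (ContinuousAlternatingMap.alternatizeUncurryFinCLM 𝕜 E F).map_zero

lemma removeNth_one_pair {α : Type*} (a b : α) : Fin.removeNth 1 ![a, b] = ![a] := by
  ext i
  fin_cases i
  rfl

lemma extDeriv_oneForm_apply {ω : E → E [⋀^Fin 1]→L[𝕜] F} {p : E} (hω : DifferentiableAt 𝕜 ω p)
    (v w : E) :
    extDeriv ω p ![v, w] =
      fderiv 𝕜 (fun q => ω q ![w]) p v - fderiv 𝕜 (fun q => ω q ![v]) p w := by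
  simp [extDeriv_apply hω, Fin.sum_univ_two, removeNth_one_pair, sub_eq_add_neg]

lemma extDeriv_oneForm_apply_vectorField {ω : E → E [⋀^Fin 1]→L[𝕜] F} {X Y : E → E} {p : E}
    (hω : DifferentiableAt 𝕜 ω p) (hX : DifferentiableAt 𝕜 X p) (hY : DifferentiableAt 𝕜 Y p) :
    extDeriv ω p ![X p, Y p] =
      fderiv 𝕜 (fun q => ω q ![Y q]) p (X p) - fderiv 𝕜 (fun q => ω q ![X q]) p (Y p)
        - ω p ![lieBracket 𝕜 X Y p] := by
  have hpair (q : E) : (fun i => ![X, Y] i q) = ![X q, Y q] := by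
    ext i
    fin_cases i <;> rfl
  have hcartan := extDeriv_apply_vectorField (V := ![X, Y]) hω
    (by simp [Fin.forall_fin_two, hX, hY])
  simp only [hpair] at hcartan
  simpa [Fin.sum_univ_two, removeNth_one_pair, sub_eq_add_neg] using hcartan

variable [Fintype ι]

/-- The covariant derivative `∇_X Y = ∑ i, X(θ i Y) • e i`, for which a frame `e` with dual coframe
`θ` is parallel. Duality of `e` and `θ` is not built into the definition. -/
def parallelFrameDeriv (e : ι → E → E) (θ : ι → E → E [⋀^Fin 1]→L[𝕜] 𝕜) (X Y : E → E) (p : E) : E :=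
  ∑ i, fderiv 𝕜 (fun q => θ i q ![Y q]) p (X p) • e i p

theorem parallelFrameDeriv_torsion {e : ι → E → E} {θ : ι → E → E [⋀^Fin 1]→L[𝕜] 𝕜}
    {X Y : E → E} {p : E} (hθ : ∀ i, DifferentiableAt 𝕜 (θ i) p)
    (hdual : ∀ v, ∑ i, θ i p ![v] • e i p = v)
    (hX : DifferentiableAt 𝕜 X p) (hY : DifferentiableAt 𝕜 Y p) :
    parallelFrameDeriv e θ X Y p - parallelFrameDeriv e θ Y X p - lieBracket 𝕜 X Y p =
      ∑ i, extDeriv (θ i) p ![X p, Y p] • e i p := by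
  conv_lhs => rw [← hdual (lieBracket 𝕜 X Y p)]
  simp only [parallelFrameDeriv, ← Finset.sum_sub_distrib, ← sub_smul,
    extDeriv_oneForm_apply_vectorField (hθ _) hX hY]

end ParallelFrame

/-- The coordinate `1`-form `dxᵢ` on `ℝ³`; thus `e¹ = dx₀` and `e² = dx₁`. -/
def coordForm (i : Fin 3) : H3 [⋀^Fin 1]→L[ℝ] ℝ :=
  .ofSubsingleton ℝ H3 ℝ 0 (.proj i)

@[simp]
lemma coordForm_apply (i : Fin 3) (v : H3) : coordForm i ![v] = v i := rfl

/-- The contact form `e⁰` as a differential `1`-form. -/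
def contactForm (p : H3) : H3 [⋀^Fin 1]→L[ℝ] ℝ :=
  coordForm 2 + (2⁻¹ : ℝ) • (p 1 • coordForm 0 - p 0 • coordForm 1)

lemma contactForm_apply (p v : H3) : contactForm p ![v] = e0' p v :=
  calc contactForm p ![v] = v 2 + 2⁻¹ * (p 1 * v 0 - p 0 * v 1) := rfl
    _ = e0' p v := by rw [e0', div_eq_inv_mul]

lemma differentiable_contactForm : Differentiable ℝ contactForm := by
  unfold contactForm
  fun_prop

lemma fderiv_contactForm_apply (p v w : H3) :
    fderiv ℝ (fun q => contactForm q ![w]) p v = (v 1 * w 0 - v 0 * w 1) / 2 := by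
  have haffine : (fun q => contactForm q ![w]) = fun q =>
      ((w 0 / 2) • .proj 1 - (w 1 / 2) • .proj 0 : H3 →L[ℝ] ℝ) q + w 2 := by
    ext q
    change contactForm q ![w] = (w 0 / 2 * q 1 - w 1 / 2 * q 0) + w 2
    rw [contactForm_apply, e0']
    ring
  rw [haffine, fderiv_add_const, ContinuousLinearMap.fderiv]
  change w 0 / 2 * v 1 - w 1 / 2 * v 0 = _
  ring

lemma extDeriv_contactForm_apply (p v w : H3) :
    extDeriv contactForm p ![v, w] = -(v 0 * w 1 - v 1 * w 0) := by
  rw [extDeriv_oneForm_apply (differentiable_contactForm p), fderiv_contactForm_apply,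
    fderiv_contactForm_apply]
  ring

/-- The left invariant frame `(e₀, e₁, e₂)`. -/
def heisenbergFrame : Fin 3 → H3 → H3 := ![E0, E1, E2]

/-- The coframe `(e⁰, e¹, e²)` dual to `heisenbergFrame`. -/
def heisenbergCoframe : Fin 3 → H3 → H3 [⋀^Fin 1]→L[ℝ] ℝ :=
  ![contactForm, fun _ => coordForm 0, fun _ => coordForm 1]

lemma differentiable_heisenbergCoframe (i : Fin 3) : Differentiable ℝ (heisenbergCoframe i) := by
  fin_cases i
  exacts [differentiable_contactForm, differentiable_const _, differentiable_const _]

lemma sum_heisenbergCoframe_smul_heisenbergFrame (p v : H3) :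
    ∑ i, heisenbergCoframe i p ![v] • heisenbergFrame i p = v := by
  have hexpand : ∑ i, heisenbergCoframe i p ![v] • heisenbergFrame i p
      = e0' p v • E0 p + v 0 • E1 p + v 1 • E2 p := by
    simp [Fin.sum_univ_three, heisenbergCoframe, heisenbergFrame, contactForm_apply]
  rw [hexpand]
  ext j
  fin_cases j
  · simp [E0, E1, E2]
  · simp [E0, E1, E2]
  · change e0' p v * 1 + v 0 * (-p 1 / 2) + v 1 * (p 0 / 2) = v 2
    rw [e0']
    ring

lemma nablaBar_eq_parallelFrameDeriv (X Y : H3 → H3) (p : H3) :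
    nablaBar X Y p = parallelFrameDeriv heisenbergFrame heisenbergCoframe X Y p := by
  simp [nablaBar, parallelFrameDeriv, Fin.sum_univ_three, heisenbergFrame, heisenbergCoframe,
    contactForm_apply]

theorem nablaBar_torsion_general {X Y : H3 → H3} {p : H3}
    (hX : DifferentiableAt ℝ X p) (hY : DifferentiableAt ℝ Y p) :
    nablaBar X Y p - nablaBar Y X p - lie X Y p
      = (-(X p 0 * Y p 1 - X p 1 * Y p 0)) • E0 p :=
  calc nablaBar X Y p - nablaBar Y X p - lie X Y p
      = ∑ i, extDeriv (heisenbergCoframe i) p ![X p, Y p] • heisenbergFrame i p := by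
        rw [nablaBar_eq_parallelFrameDeriv, nablaBar_eq_parallelFrameDeriv]
        exact parallelFrameDeriv_torsion (fun i => differentiable_heisenbergCoframe i p)
          (sum_heisenbergCoframe_smul_heisenbergFrame p) hX hY
    _ = extDeriv contactForm p ![X p, Y p] • E0 p := by
        simp [Fin.sum_univ_three, heisenbergCoframe, heisenbergFrame, extDeriv_const]
    _ = (-(X p 0 * Y p 1 - X p 1 * Y p 0)) • E0 p := by rw [extDeriv_contactForm_apply]

/-- The torsion of the adapted covariant derivative equals `−e¹∧e² ⊗ e₀ = de⁰ ⊗ e₀`: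
`∇̄_X Y − ∇̄_Y X − [X,Y] = −(X₁Y₂ − X₂Y₁)·e₀`. -/
theorem nablaBar_torsion (X Y : H3 → H3)
    (hX : ContDiff ℝ (⊤ : ℕ∞) X) (hY : ContDiff ℝ (⊤ : ℕ∞) Y) :
    ∀ p : H3,
      nablaBar X Y p - nablaBar Y X p - lie X Y p
        = (-(X p 0 * Y p 1 - X p 1 * Y p 0)) • E0 p := by
  intro p
  exact nablaBar_torsion_general (hX.differentiable (by simp) p) (hY.differentiable (by simp) p)
end
end

section
/- Let U ⊆ ℝ³ be open, α, A : U → ℝ smooth, and let g : U → ℝ³ be the Gauss map g(p) = (cos α(p), sin α(p), −A(p)), taking values in the cylinder {q : q₁² + q₂² = 1}. Let f̃¹_q(u) = −q₂u₁ + q₁u₂ and f̃²_q(u) = e⁰_q(u) = u₃ + (1/2)(q₂u₁ − q₁u₂) be the coframe on the cylinder. Then for every p ∈ U and all v, w ∈ ℝ³: f̃¹_{g(p)}(Dg_p(v))·f̃²_{g(p)}(Dg_p(w)) − f̃¹_{g(p)}(Dg_p(w))·f̃²_{g(p)}(Dg_p(v)) = −(dα_p(v)·dA_p(w) − dα_p(w)·dA_p(v)).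 In other words, the pullback by the Gauss map of the area form f̃¹∧f̃² of the cylinder equals −dα∧dA, so the Gaussian curvature of the surface is K = −(dα∧dA)(f₁,f₂). -/
open Real MeasureTheory

noncomputable section

/-- The horizontal normal `η = cos α · e₁ + sin α · e₂`. -/
def eta (α : H3 → ℝ) (p : H3) : H3 := cos (α p) • E1 p + sin (α p) • E2 p

/-- The characteristic field `f₁ = −sin α · e₁ + cos α · e₂`. -/
def F1 (α : H3 → ℝ) (p : H3) : H3 := (-sin (α p)) • E1 p + cos (α p) • E2 p

/-- The field `f₂ = e₀ + A·η`. -/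
def F2 (α A : H3 → ℝ) (p : H3) : H3 := E0 p + A p • eta α p

/-- The horizontal conormal `η* = cos α · e¹ + sin α · e² − A·e⁰`. -/
def etaStar (α A : H3 → ℝ) (p v : H3) : ℝ :=
  cos (α p) * e1' p v + sin (α p) * e2' p v - A p * e0' p v

/-- The 1-form `f¹ = −sin α · e¹ + cos α · e²`. -/
def f1' (α : H3 → ℝ) (p v : H3) : ℝ := -sin (α p) * e1' p v + cos (α p) * e2' p v

/-- The 1-form `f² = e⁰`. -/
def f2' (p v : H3) : ℝ := e0' p v

/-- The projected covariant derivative `∇_X Y = ∇̄_X Y − η*(∇̄_X Y)·η`. -/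
def nablaP (α A : H3 → ℝ) (X Y : H3 → H3) (p : H3) : H3 :=
  nablaBar X Y p - etaStar α A p (nablaBar X Y p) • eta α p

/-- The Gauss map `g(p) = (cos α(p), sin α(p), −A(p))`, with values in the cylinder. -/
def gaussMap (α A : H3 → ℝ) (p : H3) : H3 := ![cos (α p), sin (α p), -A p]

/-- The coframe element `f̃¹_q(u) = −q₂u₁ + q₁u₂` on the cylinder. -/
def ft1 (q u : H3) : ℝ := -q 1 * u 0 + q 0 * u 1

/-- The coframe element `f̃²_q(u) = e⁰_q(u)` on the cylinder. -/
def ft2 (q u : H3) : ℝ := u 2 + (q 1 * u 0 - q 0 * u 1) / 2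

/-!
Parametrise the cylinder by an angle `θ` and a height `z`. Since `q₁² + q₂² = 1`, the coframe
restricts to `f̃¹ = dθ` and `f̃² = dz - dθ / 2`, so `f̃¹ ∧ f̃² = dθ ∧ dz`. The Gauss map is the
point with angle `α` and height `-A`.
-/

/-- The map into the cylinder `{q : q₁² + q₂² = 1}` with angle function `θ` and height function
`z`. For `θ = α` and `z = -A` on `H3` it is, definitionally, `gaussMap α A`. -/
def cylinderMap {E : Type*} (θ z : E → ℝ) (x : E) : H3 := ![cos (θ x), sin (θ x), z x]

section CylinderMap

variable {E : Type*} [NormedAddCommGroup E] [NormedSpace ℝ E] {θ z : E → ℝ} {p : E}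

theorem hasFDerivAt_cylinderMap {θ' z' : E →L[ℝ] ℝ} (hθ : HasFDerivAt θ θ' p)
    (hz : HasFDerivAt z z' p) :
    HasFDerivAt (cylinderMap θ z)
      (ContinuousLinearMap.pi ![-sin (θ p) • θ', cos (θ p) • θ', z']) p := by
  rw [hasFDerivAt_pi']
  intro i
  fin_cases i
  · exact hθ.cos
  · exact hθ.sin
  · exact hz

theorem fderiv_cylinderMap_apply (hθ : DifferentiableAt ℝ θ p) (hz : DifferentiableAt ℝ z p)
    (v : E) :
    fderiv ℝ (cylinderMap θ z) p v =
      ![-sin (θ p) * fderiv ℝ θ p v, cos (θ p) * fderiv ℝ θ p v, fderiv ℝ z p v] := by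
  rw [(hasFDerivAt_cylinderMap hθ.hasFDerivAt hz.hasFDerivAt).fderiv]
  ext i
  fin_cases i <;> rfl

theorem ft1_fderiv_cylinderMap (hθ : DifferentiableAt ℝ θ p) (hz : DifferentiableAt ℝ z p)
    (v : E) :
    ft1 (cylinderMap θ z p) (fderiv ℝ (cylinderMap θ z) p v) = fderiv ℝ θ p v := by
  rw [fderiv_cylinderMap_apply hθ hz]
  calc
    -sin (θ p) * (-sin (θ p) * fderiv ℝ θ p v) + cos (θ p) * (cos (θ p) * fderiv ℝ θ p v)
      = (sin (θ p) ^ 2 + cos (θ p) ^ 2) * fderiv ℝ θ p v := by ring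
    _ = fderiv ℝ θ p v := by rw [sin_sq_add_cos_sq, one_mul]

theorem ft2_eq_sub_ft1 (q u : H3) : ft2 q u = u 2 - ft1 q u / 2 := by
  rw [ft1, ft2]
  ring

theorem ft2_fderiv_cylinderMap (hθ : DifferentiableAt ℝ θ p) (hz : DifferentiableAt ℝ z p)
    (v : E) :
    ft2 (cylinderMap θ z p) (fderiv ℝ (cylinderMap θ z) p v) =
      fderiv ℝ z p v - fderiv ℝ θ p v / 2 := by
  rw [ft2_eq_sub_ft1, ft1_fderiv_cylinderMap hθ hz, fderiv_cylinderMap_apply hθ hz]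
  rfl

theorem gaussMap_pullback_area_general {α A : E → ℝ} (hα : DifferentiableAt ℝ α p)
    (hA : DifferentiableAt ℝ A p) (v w : E) :
    ft1 (cylinderMap α (-A) p) (fderiv ℝ (cylinderMap α (-A)) p v)
        * ft2 (cylinderMap α (-A) p) (fderiv ℝ (cylinderMap α (-A)) p w)
      - ft1 (cylinderMap α (-A) p) (fderiv ℝ (cylinderMap α (-A)) p w)
        * ft2 (cylinderMap α (-A) p) (fderiv ℝ (cylinderMap α (-A)) p v)
      = -(fderiv ℝ α p v * fderiv ℝ A p w - fderiv ℝ α p w * fderiv ℝ A p v) := by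
  simp only [ft1_fderiv_cylinderMap hα hA.neg, ft2_fderiv_cylinderMap hα hA.neg, fderiv_neg,
    neg_apply]
  ring

end CylinderMap

/-- The pullback by the Gauss map of the area form `f̃¹∧f̃²` of the cylinder
equals `−dα∧dA`, so the Gaussian curvature is `K = −(dα∧dA)(f₁,f₂)`. -/
theorem gaussMap_pullback_area (U : Set H3) (hU : IsOpen U) (α A : H3 → ℝ)
    (hα : ContDiffOn ℝ (⊤ : ℕ∞) α U) (hA : ContDiffOn ℝ (⊤ : ℕ∞) A U) :
    ∀ p ∈ U, ∀ v w : H3,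
      ft1 (gaussMap α A p) (fderiv ℝ (gaussMap α A) p v)
          * ft2 (gaussMap α A p) (fderiv ℝ (gaussMap α A) p w)
        - ft1 (gaussMap α A p) (fderiv ℝ (gaussMap α A) p w)
          * ft2 (gaussMap α A p) (fderiv ℝ (gaussMap α A) p v)
        = -(fderiv ℝ α p v * fderiv ℝ A p w - fderiv ℝ α p w * fderiv ℝ A p v) := by
  intro p hp
  exact gaussMap_pullback_area_general
    ((hα.differentiableOn (by simp)).differentiableAt (hU.mem_nhds hp))
    ((hA.differentiableOn (by simp)).differentiableAt (hU.mem_nhds hp))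
end
end

section
/- For all smooth vector fields X, Y on U and all p ∈ U, the Cartan formula for the exterior derivative of the horizontal conormal η* gives: D(q ↦ η*_q(Y(q)))_p(X(p)) − D(q ↦ η*_q(X(q)))_p(Y(p)) − η*_p([X,Y](p)) = [(dα + A²f² + Aη*) ∧ f¹ − dA ∧ f²]_p(X(p), Y(p)), where for 1-forms θ, σ one sets (θ∧σ)(v,w) = θ(v)σ(w) − θ(w)σ(v); that is, dη* = (dα + A²f² + Aη*)∧f¹ − dA∧f². -/
open Real MeasureTheory

noncomputable section

/-! The coframe of `ℍ¹` satisfies `de¹ = de² = 0` and `de⁰ = -e¹ ∧ e²`, so the Leibniz rule gives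
`dη* = dα ∧ f¹ - dA ∧ e⁰ + A e¹ ∧ e²`. Rotating the horizontal coframe by `α` preserves its area
form, so `e¹ ∧ e² = (η* + A f²) ∧ f¹`, which turns the last term into `(A² f² + A η*) ∧ f¹`. -/

section ExteriorCalculus

/-- The wedge product `θ ∧ σ` of two covectors, without the factor `1/2`; covectors are bare
functions, as in the definitions of the coframe. -/
def wedge {R V M : Type*} [Ring R] [AddCommGroup M] [Module R M] (θ : V → R) (σ : V → M)
    (v w : V) : M :=
  θ v • σ w - θ w • σ v

variable {𝕜 E F : Type*} [NontriviallyNormedField 𝕜] [NormedAddCommGroup E] [NormedSpace 𝕜 E]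
  [NormedAddCommGroup F] [NormedSpace 𝕜 F]

variable (𝕜) in
/-- The exterior derivative `dθ(X, Y)` of a 1-form through Cartan's invariant formula. It is
evaluated on vector fields, rather than obtained from `extDeriv`, because the forms here are bare
functions of a point and a vector. -/
def cartanDeriv (θ : E → E → F) (X Y : E → E) (p : E) : F :=
  fderiv 𝕜 (fun q => θ q (Y q)) p (X p) - fderiv 𝕜 (fun q => θ q (X q)) p (Y p)
    - θ p (VectorField.lieBracket 𝕜 X Y p)

variable {θ σ : E → E → F} {X Y : E → E} {p : E}

theorem cartanDeriv_add
    (hθX : DifferentiableAt 𝕜 (fun q => θ q (X q)) p)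
    (hθY : DifferentiableAt 𝕜 (fun q => θ q (Y q)) p)
    (hσX : DifferentiableAt 𝕜 (fun q => σ q (X q)) p)
    (hσY : DifferentiableAt 𝕜 (fun q => σ q (Y q)) p) :
    cartanDeriv 𝕜 (fun q v => θ q v + σ q v) X Y p
      = cartanDeriv 𝕜 θ X Y p + cartanDeriv 𝕜 σ X Y p := by
  simp only [cartanDeriv, fderiv_fun_add hθX hσX, fderiv_fun_add hθY hσY, add_apply]
  abel

theorem cartanDeriv_sub
    (hθX : DifferentiableAt 𝕜 (fun q => θ q (X q)) p)
    (hθY : DifferentiableAt 𝕜 (fun q => θ q (Y q)) p)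
    (hσX : DifferentiableAt 𝕜 (fun q => σ q (X q)) p)
    (hσY : DifferentiableAt 𝕜 (fun q => σ q (Y q)) p) :
    cartanDeriv 𝕜 (fun q v => θ q v - σ q v) X Y p
      = cartanDeriv 𝕜 θ X Y p - cartanDeriv 𝕜 σ X Y p := by
  simp only [cartanDeriv, fderiv_fun_sub hθX hσX, fderiv_fun_sub hθY hσY, sub_apply]
  abel

theorem cartanDeriv_smul {f : E → 𝕜} (hf : DifferentiableAt 𝕜 f p)
    (hθX : DifferentiableAt 𝕜 (fun q => θ q (X q)) p)
    (hθY : DifferentiableAt 𝕜 (fun q => θ q (Y q)) p) :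
    cartanDeriv 𝕜 (fun q v => f q • θ q v) X Y p
      = wedge (fderiv 𝕜 f p) (θ p) (X p) (Y p) + f p • cartanDeriv 𝕜 θ X Y p := by
  simp only [cartanDeriv, wedge, fderiv_fun_smul hf hθX, fderiv_fun_smul hf hθY,
    add_apply, smul_apply, ContinuousLinearMap.smulRight_apply]
  module

theorem cartanDeriv_const (L : E →L[𝕜] F) (hX : DifferentiableAt 𝕜 X p)
    (hY : DifferentiableAt 𝕜 Y p) :
    cartanDeriv 𝕜 (fun _ v => L v) X Y p = 0 := by
  have fderiv_comp {Z : E → E} (hZ : DifferentiableAt 𝕜 Z p) :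
      fderiv 𝕜 (fun q => L (Z q)) p = L.comp (fderiv 𝕜 Z p) :=
    (L.hasFDerivAt.comp p hZ.hasFDerivAt).fderiv
  simp only [cartanDeriv, fderiv_comp hX, fderiv_comp hY, ContinuousLinearMap.comp_apply,
    VectorField.lieBracket_eq, map_sub, sub_self]

end ExteriorCalculus

section StructureEquations

variable {X Y : H3 → H3} {p : H3}

theorem cartanDeriv_coord (i : Fin 3) (hX : DifferentiableAt ℝ X p)
    (hY : DifferentiableAt ℝ Y p) :
    cartanDeriv ℝ (fun _ v => v i) X Y p = 0 :=
  cartanDeriv_const (ContinuousLinearMap.proj (R := ℝ) (φ := fun _ : Fin 3 => ℝ) i) hX hY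

theorem differentiableAt_e0'_apply (hX : DifferentiableAt ℝ X p) :
    DifferentiableAt ℝ (fun q => e0' q (X q)) p := by
  unfold e0'
  fun_prop

theorem cartanDeriv_e0' (hX : DifferentiableAt ℝ X p) (hY : DifferentiableAt ℝ Y p) :
    cartanDeriv ℝ e0' X Y p = -wedge (e1' p) (e2' p) (X p) (Y p) := by
  have he0 : e0' = fun q v => v 2 + ((q 1 / 2) • v 0 - (q 0 / 2) • v 1) := by
    funext q v
    simp only [e0', smul_eq_mul]
    ring
  have fderiv_half_coord (i : Fin 3) (v : H3) :
      fderiv ℝ (fun q : H3 => q i / 2) p v = v i / 2 := by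
    have h := (hasFDerivAt_apply (𝕜 := ℝ) i p).mul_const (2⁻¹ : ℝ)
    simp only [div_eq_mul_inv, h.fderiv, smul_apply, ContinuousLinearMap.proj_apply, smul_eq_mul,
      mul_comm]
  rw [he0, cartanDeriv_add (by fun_prop) (by fun_prop) (by fun_prop) (by fun_prop),
    cartanDeriv_sub (by fun_prop) (by fun_prop) (by fun_prop) (by fun_prop),
    cartanDeriv_smul (by fun_prop) (by fun_prop) (by fun_prop),
    cartanDeriv_smul (by fun_prop) (by fun_prop) (by fun_prop)]
  simp only [cartanDeriv_coord _ hX hY, wedge, fderiv_half_coord, e1', e2', smul_eq_mul]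
  ring

variable {α A : H3 → ℝ}

theorem cartanDeriv_etaStar (hα : DifferentiableAt ℝ α p) (hA : DifferentiableAt ℝ A p)
    (hX : DifferentiableAt ℝ X p) (hY : DifferentiableAt ℝ Y p) :
    cartanDeriv ℝ (etaStar α A) X Y p
      = wedge (fderiv ℝ α p) (f1' α p) (X p) (Y p) - wedge (fderiv ℝ A p) (f2' p) (X p) (Y p)
        + A p * wedge (e1' p) (e2' p) (X p) (Y p) := by
  have he0X := differentiableAt_e0'_apply hX
  have he0Y := differentiableAt_e0'_apply hY
  have hη : etaStar α A = fun q v => cos (α q) • v 0 + sin (α q) • v 1 - A q • e0' q v := rfl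
  rw [hη, cartanDeriv_sub (by fun_prop) (by fun_prop) (by fun_prop) (by fun_prop),
    cartanDeriv_add (by fun_prop) (by fun_prop) (by fun_prop) (by fun_prop),
    cartanDeriv_smul (by fun_prop) (by fun_prop) (by fun_prop),
    cartanDeriv_smul (by fun_prop) (by fun_prop) (by fun_prop),
    cartanDeriv_smul hA he0X he0Y, cartanDeriv_coord _ hX hY, cartanDeriv_coord _ hX hY,
    cartanDeriv_e0' hX hY, fderiv_cos hα, fderiv_sin hα]
  simp only [wedge, f1', f2', e1', e2', smul_apply, smul_eq_mul]
  ring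

theorem wedge_e1'_e2' (α A : H3 → ℝ) (p v w : H3) :
    wedge (e1' p) (e2' p) v w
      = wedge (fun u => A p * f2' p u + etaStar α A p u) (f1' α p) v w := by
  simp only [wedge, etaStar, f1', f2', e1', e2', smul_eq_mul]
  linear_combination (v 1 * w 0 - v 0 * w 1) * sin_sq_add_cos_sq (α p)

theorem d_etaStar_general (hα : DifferentiableAt ℝ α p) (hA : DifferentiableAt ℝ A p)
    (hX : DifferentiableAt ℝ X p) (hY : DifferentiableAt ℝ Y p) :
    cartanDeriv ℝ (etaStar α A) X Y p
      = wedge (fun v => fderiv ℝ α p v + (A p) ^ 2 * f2' p v + A p * etaStar α A p v) (f1' α p)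
          (X p) (Y p)
        - wedge (fderiv ℝ A p) (f2' p) (X p) (Y p) := by
  rw [cartanDeriv_etaStar hα hA hX hY, wedge_e1'_e2' α A]
  simp only [wedge, smul_eq_mul]
  ring

end StructureEquations

/-- Cartan's formula for the exterior derivative of the horizontal conormal:
`dη* = (dα + A²f² + Aη*)∧f¹ − dA∧f²`, where `(θ∧σ)(v,w) = θ(v)σ(w) − θ(w)σ(v)`. -/
theorem d_etaStar (U : Set H3) (hU : IsOpen U) (α A : H3 → ℝ)
    (hα : ContDiffOn ℝ (⊤ : ℕ∞) α U) (hA : ContDiffOn ℝ (⊤ : ℕ∞) A U)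
    (X Y : H3 → H3) (hX : ContDiffOn ℝ (⊤ : ℕ∞) X U) (hY : ContDiffOn ℝ (⊤ : ℕ∞) Y U) :
    ∀ p ∈ U,
      fderiv ℝ (fun q => etaStar α A q (Y q)) p (X p)
        - fderiv ℝ (fun q => etaStar α A q (X q)) p (Y p)
        - etaStar α A p (lie X Y p)
      = ((fderiv ℝ α p (X p) + (A p)^2 * f2' p (X p) + A p * etaStar α A p (X p))
            * f1' α p (Y p)
          - (fderiv ℝ α p (Y p) + (A p)^2 * f2' p (Y p) + A p * etaStar α A p (Y p))
            * f1' α p (X p))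
        - (fderiv ℝ A p (X p) * f2' p (Y p) - fderiv ℝ A p (Y p) * f2' p (X p)) := by
  intro p hp
  have hUp := hU.mem_nhds hp
  exact d_etaStar_general ((hα.contDiffAt hUp).differentiableAt (by simp))
    ((hA.contDiffAt hUp).differentiableAt (by simp))
    ((hX.contDiffAt hUp).differentiableAt (by simp))
    ((hY.contDiffAt hUp).differentiableAt (by simp))
end
end

section
/- For every p ∈ U, η*_p([f₁,f₂](p)) = dα_p(f₂(p)) + dA_p(f₁(p)) + A(p)². In particular, if the plane field annihilated by η* (spanned by f₁ and f₂) is involutive, i.e. η*_p([f₁,f₂](p)) = 0 for all p ∈ U (as happens when f₁, f₂ span the tangent planes of a surface), then dα(f₂) = −(dA(f₁) + A²) on U. -/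
open Real MeasureTheory

noncomputable section

/-!
The only nonzero bracket of the left invariant frame is `[e₁, e₂] = e₀`, and rotating the frame
through `α` gives `dη = dα · f₁`, `df₁ = -dα · η` on coefficients. The Leibniz rule then yields
`[f₁, e₀] = dα(e₀) η` and `[f₁, η] = dα(f₁) f₁ + dα(η) η - e₀`, hence
`[f₁, f₂] = A dα(f₁) f₁ + (dα(f₂) + dA(f₁)) η - A e₀`. Finally `η*` takes the values `0`, `1`, `-A`
on `f₁`, `η`, `e₀`; the term `A²` is thus the contribution of `[e₁, e₂]`.
-/

open VectorField

theorem lie_eq_lieBracket : lie = lieBracket ℝ := rfl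

theorem hasFDerivAt_E0 (p : H3) : HasFDerivAt E0 (0 : H3 →L[ℝ] H3) p := hasFDerivAt_const _ p

theorem hasFDerivAt_E1 (p : H3) :
    HasFDerivAt E1
      ((-(1 / 2 : ℝ) • ContinuousLinearMap.proj 1 : H3 →L[ℝ] ℝ).smulRight (E0 p)) p := by
  refine (ContinuousLinearMap.hasFDerivAt _).const_add ![1, 0, 0] |>.congr_of_eventuallyEq
    (.of_forall fun q => ?_)
  ext i
  fin_cases i <;> simp [E0, E1, div_eq_inv_mul]

theorem hasFDerivAt_E2 (p : H3) :
    HasFDerivAt E2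
      (((1 / 2 : ℝ) • ContinuousLinearMap.proj 0 : H3 →L[ℝ] ℝ).smulRight (E0 p)) p := by
  refine (ContinuousLinearMap.hasFDerivAt _).const_add ![0, 1, 0] |>.congr_of_eventuallyEq
    (.of_forall fun q => ?_)
  ext i
  fin_cases i <;> simp [E0, E2, div_eq_inv_mul]

theorem differentiable_E0 : Differentiable ℝ E0 := fun p => (hasFDerivAt_E0 p).differentiableAt

theorem differentiable_E1 : Differentiable ℝ E1 := fun p => (hasFDerivAt_E1 p).differentiableAt

theorem differentiable_E2 : Differentiable ℝ E2 := fun p => (hasFDerivAt_E2 p).differentiableAt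

theorem lieBracket_E1_E2 : lieBracket ℝ E1 E2 = E0 := by
  ext1 p
  rw [lieBracket, (hasFDerivAt_E1 p).fderiv, (hasFDerivAt_E2 p).fderiv]
  ext i
  fin_cases i <;> norm_num [E0, E1, E2]

theorem lieBracket_E1_E0 : lieBracket ℝ E1 E0 = 0 := by
  ext1 p
  rw [lieBracket, (hasFDerivAt_E1 p).fderiv, (hasFDerivAt_E0 p).fderiv]
  simp [E0]

theorem lieBracket_E2_E0 : lieBracket ℝ E2 E0 = 0 := by
  ext1 p
  rw [lieBracket, (hasFDerivAt_E2 p).fderiv, (hasFDerivAt_E0 p).fderiv]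
  simp [E0]

section RotatedFrame

variable {α A : H3 → ℝ} {p : H3}

theorem differentiableAt_eta (hα : DifferentiableAt ℝ α p) : DifferentiableAt ℝ (eta α) p :=
  (hα.cos.smul (differentiable_E1 p)).add (hα.sin.smul (differentiable_E2 p))

theorem lieBracket_F1_left (hα : DifferentiableAt ℝ α p) (V : H3 → H3) :
    lieBracket ℝ (F1 α) V p =
      -sin (α p) • lieBracket ℝ E1 V p + cos (α p) • lieBracket ℝ E2 V p
        + fderiv ℝ α p (V p) • eta α p := by
  have hE1 := differentiable_E1 p
  have hE2 := differentiable_E2 p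
  change lieBracket ℝ ((fun q => -sin (α q) • E1 q) + fun q => cos (α q) • E2 q) V p = _
  rw [lieBracket_add_left (hα.sin.fun_neg.fun_smul hE1) (hα.cos.fun_smul hE2),
    lieBracket_smul_left hα.sin.fun_neg hE1, lieBracket_smul_left hα.cos hE2,
    hα.hasFDerivAt.sin.fun_neg.fderiv, hα.hasFDerivAt.cos.fderiv]
  simp only [eta, neg_apply, smul_apply, smul_eq_mul]
  module

theorem lieBracket_eta_right (hα : DifferentiableAt ℝ α p) (V : H3 → H3) :
    lieBracket ℝ V (eta α) p =
      cos (α p) • lieBracket ℝ V E1 p + sin (α p) • lieBracket ℝ V E2 p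
        + fderiv ℝ α p (V p) • F1 α p := by
  have hE1 := differentiable_E1 p
  have hE2 := differentiable_E2 p
  change lieBracket ℝ V ((fun q => cos (α q) • E1 q) + fun q => sin (α q) • E2 q) p = _
  rw [lieBracket_add_right (hα.cos.fun_smul hE1) (hα.sin.fun_smul hE2),
    lieBracket_smul_right hα.cos hE1, lieBracket_smul_right hα.sin hE2,
    hα.hasFDerivAt.cos.fderiv, hα.hasFDerivAt.sin.fderiv]
  simp only [F1, smul_apply, smul_eq_mul]
  module

theorem lieBracket_F2_right (hα : DifferentiableAt ℝ α p) (hA : DifferentiableAt ℝ A p)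
    (V : H3 → H3) :
    lieBracket ℝ V (F2 α A) p =
      lieBracket ℝ V E0 p + fderiv ℝ A p (V p) • eta α p + A p • lieBracket ℝ V (eta α) p := by
  have hη := differentiableAt_eta hα
  change lieBracket ℝ V (E0 + fun q => A q • eta α q) p = _
  rw [lieBracket_add_right (differentiable_E0 p) (hA.fun_smul hη), lieBracket_smul_right hA hη,
    add_assoc]

theorem lieBracket_F1_E0 (hα : DifferentiableAt ℝ α p) :
    lieBracket ℝ (F1 α) E0 p = fderiv ℝ α p (E0 p) • eta α p := by
  simp [lieBracket_F1_left hα, lieBracket_E1_E0, lieBracket_E2_E0]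

theorem lieBracket_F1_E1 (hα : DifferentiableAt ℝ α p) :
    lieBracket ℝ (F1 α) E1 p = fderiv ℝ α p (E1 p) • eta α p - cos (α p) • E0 p := by
  rw [lieBracket_F1_left hα, lieBracket_self, lieBracket_swap (V := E2), lieBracket_E1_E2,
    Pi.zero_apply]
  module

theorem lieBracket_F1_E2 (hα : DifferentiableAt ℝ α p) :
    lieBracket ℝ (F1 α) E2 p = fderiv ℝ α p (E2 p) • eta α p - sin (α p) • E0 p := by
  rw [lieBracket_F1_left hα, lieBracket_self, lieBracket_E1_E2, Pi.zero_apply]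
  module

theorem lieBracket_F1_eta (hα : DifferentiableAt ℝ α p) :
    lieBracket ℝ (F1 α) (eta α) p =
      fderiv ℝ α p (F1 α p) • F1 α p + fderiv ℝ α p (eta α p) • eta α p - E0 p := by
  have hdα : fderiv ℝ α p (eta α p) =
      cos (α p) * fderiv ℝ α p (E1 p) + sin (α p) * fderiv ℝ α p (E2 p) := by
    simp only [eta, map_add, map_smul, smul_eq_mul]
  have hE0 : E0 p = (cos (α p) ^ 2 + sin (α p) ^ 2) • E0 p := by
    rw [cos_sq_add_sin_sq, one_smul]
  rw [lieBracket_eta_right hα, lieBracket_F1_E1 hα, lieBracket_F1_E2 hα, hdα]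
  linear_combination (norm := module) hE0

theorem lieBracket_F1_F2 (hα : DifferentiableAt ℝ α p) (hA : DifferentiableAt ℝ A p) :
    lieBracket ℝ (F1 α) (F2 α A) p =
      (A p * fderiv ℝ α p (F1 α p)) • F1 α p
        + (fderiv ℝ α p (F2 α A p) + fderiv ℝ A p (F1 α p)) • eta α p - A p • E0 p := by
  have hdα : fderiv ℝ α p (F2 α A p) =
      fderiv ℝ α p (E0 p) + A p * fderiv ℝ α p (eta α p) := by
    simp only [F2, map_add, map_smul, smul_eq_mul]
  rw [lieBracket_F2_right hα hA, lieBracket_F1_E0 hα, lieBracket_F1_eta hα, hdα]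
  module

end RotatedFrame

section Conormal

variable (α A : H3 → ℝ) (p : H3)

theorem isLinearMap_etaStar : IsLinearMap ℝ (etaStar α A p) where
  map_add v w := by simp only [etaStar, e0', e1', e2', Pi.add_apply]; ring
  map_smul c v := by simp only [etaStar, e0', e1', e2', Pi.smul_apply, smul_eq_mul]; ring

theorem etaStar_E0 : etaStar α A p (E0 p) = -A p := by
  simp [etaStar, e0', e1', e2', E0]

theorem etaStar_E1 : etaStar α A p (E1 p) = cos (α p) := by
  simp only [etaStar, e0', e1', e2', E1, Matrix.cons_val]
  ring

theorem etaStar_E2 : etaStar α A p (E2 p) = sin (α p) := by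
  simp only [etaStar, e0', e1', e2', E2, Matrix.cons_val]
  ring

theorem etaStar_F1 : etaStar α A p (F1 α p) = 0 := by
  have h := isLinearMap_etaStar α A p
  rw [F1, h.map_add, h.map_smul, h.map_smul, etaStar_E1, etaStar_E2, smul_eq_mul, smul_eq_mul]
  ring

theorem etaStar_eta : etaStar α A p (eta α p) = 1 := by
  have h := isLinearMap_etaStar α A p
  rw [eta, h.map_add, h.map_smul, h.map_smul, etaStar_E1, etaStar_E2, smul_eq_mul, smul_eq_mul,
    ← sq, ← sq, cos_sq_add_sin_sq]

end Conormal

theorem etaStar_bracket_f1_f2_general {α A : H3 → ℝ} {p : H3}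
    (hα : DifferentiableAt ℝ α p) (hA : DifferentiableAt ℝ A p) :
    etaStar α A p (lie (F1 α) (F2 α A) p)
      = fderiv ℝ α p (F2 α A p) + fderiv ℝ A p (F1 α p) + (A p) ^ 2 := by
  have h := isLinearMap_etaStar α A p
  rw [lie_eq_lieBracket, lieBracket_F1_F2 hα hA, h.map_sub, h.map_add, h.map_smul, h.map_smul,
    h.map_smul, etaStar_F1, etaStar_eta, etaStar_E0]
  simp only [smul_eq_mul]
  ring

/-- `η*([f₁,f₂]) = dα(f₂) + dA(f₁) + A²`; in particular, if the plane field
annihilated by `η*` is involutive then `dα(f₂) = −(dA(f₁) + A²)` on `U`. -/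
theorem etaStar_bracket_f1_f2 (U : Set H3) (hU : IsOpen U) (α A : H3 → ℝ)
    (hα : ContDiffOn ℝ (⊤ : ℕ∞) α U) (hA : ContDiffOn ℝ (⊤ : ℕ∞) A U) :
    (∀ p ∈ U,
      etaStar α A p (lie (F1 α) (F2 α A) p)
        = fderiv ℝ α p (F2 α A p) + fderiv ℝ A p (F1 α p) + (A p)^2)
    ∧ ((∀ p ∈ U, etaStar α A p (lie (F1 α) (F2 α A) p) = 0) →
        ∀ p ∈ U, fderiv ℝ α p (F2 α A p) = -(fderiv ℝ A p (F1 α p) + (A p)^2)) := by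
  have bracket p (hp : p ∈ U) := etaStar_bracket_f1_f2_general
    ((hα.contDiffAt (hU.mem_nhds hp)).differentiableAt (by simp))
    ((hA.contDiffAt (hU.mem_nhds hp)).differentiableAt (by simp))
  exact ⟨bracket, fun h p hp => by linarith [bracket p hp, h p hp]⟩
end
end

section
/- Assume that dα(f₂) + dA(f₁) + A² = 0 on U (equivalently, the plane field spanned by f₁, f₂ is involutive, as happens when it is tangent to a surface). Then the second fundamental form V(X,Y) = −dα(X)·f¹(Y) + dA(X)·f²(Y) satisfies, for every p ∈ U and all tangent vectors v, w at p (η*_p(v) = η*_p(w) = 0): V_p(v,w) − V_p(w,v) = −A(p)²·(f¹_p(v)·f²_p(w) − f¹_p(w)·f²_p(v)); in particular V is not symmetric unless A = 0. -/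
/-!
The forms `η*, f¹, f²` are dual to the frame `η, f₁, f₂`, so on `ker η*` every linear form `ω`
restricts to `ω(f₁) f¹ + ω(f₂) f²`. Substituting this for `dα` and `dA` in the antisymmetrization
`-dα ∧ f¹ + dA ∧ f²` of `V` leaves `(dα(f₂) + dA(f₁)) f¹ ∧ f²`, and involutivity says that the
coefficient is `-A²`.
-/

open Real MeasureTheory

noncomputable section

/-- The pointwise second fundamental form `V_p(v,w) = −dα_p(v)·f¹_p(w) + dA_p(v)·f²_p(w)`. -/
def secondFF (α A : H3 → ℝ) (p v w : H3) : ℝ :=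
  -(fderiv ℝ α p v) * f1' α p w + fderiv ℝ A p v * f2' p w

theorem e1'_smul_E1_add_e2'_smul_E2_add_e0'_smul_E0 (p v : H3) :
    e1' p v • E1 p + e2' p v • E2 p + e0' p v • E0 p = v := by
  ext i
  fin_cases i <;>
  · simp only [e0', e1', e2', E0, E1, E2, Pi.add_apply, Pi.smul_apply, smul_eq_mul,
      Fin.zero_eta, Fin.mk_one, Fin.reduceFinMk, Matrix.cons_val]
    ring

theorem etaStar_smul_eta_add_f1'_smul_F1_add_f2'_smul_F2 (α A : H3 → ℝ) (p v : H3) :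
    etaStar α A p v • eta α p + f1' α p v • F1 α p + f2' p v • F2 α A p = v := by
  simp only [etaStar, eta, f1', F1, f2', F2]
  linear_combination (norm := module) e1'_smul_E1_add_e2'_smul_E2_add_e0'_smul_E0 p v +
    sin_sq_add_cos_sq (α p) • (e1' p v • E1 p + e2' p v • E2 p)

section Tangent

variable {α A : H3 → ℝ} {p v w : H3}

theorem map_eq_of_etaStar_eq_zero {F M : Type*} [AddCommMonoid M] [Module ℝ M] [FunLike F H3 M]
    [LinearMapClass F ℝ H3 M] (ω : F) (hv : etaStar α A p v = 0) :
    ω v = f1' α p v • ω (F1 α p) + f2' p v • ω (F2 α A p) := by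
  have expansion : f1' α p v • F1 α p + f2' p v • F2 α A p = v := by
    simpa only [hv, zero_smul, zero_add] using
      etaStar_smul_eta_add_f1'_smul_F1_add_f2'_smul_F2 α A p v
  rw [← map_smul, ← map_smul, ← map_add, expansion]

theorem secondFF_sub_secondFF_swap (hv : etaStar α A p v = 0) (hw : etaStar α A p w = 0) :
    secondFF α A p v w - secondFF α A p w v =
      (fderiv ℝ α p (F2 α A p) + fderiv ℝ A p (F1 α p)) *
        (f1' α p v * f2' p w - f1' α p w * f2' p v) := by
  simp only [secondFF, map_eq_of_etaStar_eq_zero _ hv, map_eq_of_etaStar_eq_zero _ hw, smul_eq_mul]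
  ring

theorem secondFF_antisymmetric_part_general {α' A' : H3 →L[ℝ] ℝ} (hα : HasFDerivAt α α' p)
    (hA : HasFDerivAt A A' p) (hinv : α' (F2 α A p) + A' (F1 α p) + A p ^ 2 = 0)
    (hv : etaStar α A p v = 0) (hw : etaStar α A p w = 0) :
    secondFF α A p v w - secondFF α A p w v =
      -A p ^ 2 * (f1' α p v * f2' p w - f1' α p w * f2' p v) := by
  rw [secondFF_sub_secondFF_swap hv hw, hα.fderiv, hA.fderiv, eq_neg_of_add_eq_zero_left hinv]

end Tangent

/-- If `dα(f₂) + dA(f₁) + A² = 0` on `U` (involutivity), then the antisymmetric part of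
the second fundamental form on tangent vectors is `V(v,w) − V(w,v) = −A²·(f¹∧f²)(v,w)`. -/
theorem secondFF_antisymmetric_part (U : Set H3) (hU : IsOpen U) (α A : H3 → ℝ)
    (hα : ContDiffOn ℝ (⊤ : ℕ∞) α U) (hA : ContDiffOn ℝ (⊤ : ℕ∞) A U)
    (hinv : ∀ p ∈ U, fderiv ℝ α p (F2 α A p) + fderiv ℝ A p (F1 α p) + (A p)^2 = 0) :
    ∀ p ∈ U, ∀ v w : H3, etaStar α A p v = 0 → etaStar α A p w = 0 →
      secondFF α A p v w - secondFF α A p w v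
        = -(A p)^2 * (f1' α p v * f2' p w - f1' α p w * f2' p v) := by
  intro p hp v w hv hw
  have hαp := (hα.contDiffAt (hU.mem_nhds hp)).differentiableAt (by simp)
  have hAp := (hA.contDiffAt (hU.mem_nhds hp)).differentiableAt (by simp)
  exact secondFF_antisymmetric_part_general hαp.hasFDerivAt hAp.hasFDerivAt (hinv p hp) hv hw
end
end

section
/- (Codazzi equation) Let X, Y, Z be smooth tangent vector fields on U (η* vanishes on each) such that [X,Y] is tangent. Then for all p ∈ U: X(V(Y,Z))(p) − V(∇_X Y, Z)(p) − V(Y, ∇_X Z)(p) − Y(V(X,Z))(p) + V(∇_Y X, Z)(p) + V(X, ∇_Y Z)(p) + V(T(X,Y), Z)(p) = 0, where V(X,Y) = −dα(X)·f¹(Y) + dA(X)·f²(Y) is the second fundamental form, T(X,Y) = ∇_X Y − ∇_Y X − [X,Y] is the torsion of ∇, and X(V(Y,Z)) denotes the directional derivative D(q ↦ V(Y,Z)(q))_p(X(p)). -/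
open Real MeasureTheory

noncomputable section

/-!
Differentiate `V(Y, Z) = -dα(Y) f¹(Z) + dA(Y) f²(Z)` along `X` by the Leibniz rule. The frame is
parallel for `∇̄`, and `f¹`, `f²` vanish on `η`, so `X(f²(Z)) = f²(∇_X Z)`, while the rotation of
`f¹` by `α` costs one extra term: `X(f¹(Z)) = f¹(∇_X Z) - dα(X) ⟨η, Z⟩`. Therefore
`X(V(Y, Z)) - V(Y, ∇_X Z) = -X(dα(Y)) f¹(Z) + X(dA(Y)) f²(Z) + dα(X) dα(Y) ⟨η, Z⟩`.
The last term is symmetric in `X` and `Y`, and `[X, Y]` is the commutator of derivations, so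
subtracting the same expression with `X` and `Y` exchanged leaves `V([X, Y], Z)`, which cancels
the bracket in the torsion term.
-/

section

variable {α A : H3 → ℝ} {X Y Z : H3 → H3} {p : H3}

/-- The 1-form `⟨η, ·⟩ = cos α · e¹ + sin α · e²` dual to the horizontal normal `η` in the metric
for which `e₀, e₁, e₂` is orthonormal; unlike `etaStar` it has no `e⁰` component. It is minus
the derivative of `f¹` with respect to the angle `α`. -/
def etaFlat (α : H3 → ℝ) (p v : H3) : ℝ := cos (α p) * e1' p v + sin (α p) * e2' p v

theorem e0'_frame_sum (p : H3) (a b c : ℝ) : e0' p (a • E0 p + b • E1 p + c • E2 p) = a := by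
  simp only [e0', E0, E1, E2, Pi.add_apply, Pi.smul_apply, smul_eq_mul, Matrix.cons_val]
  ring

theorem e1'_frame_sum (p : H3) (a b c : ℝ) : e1' p (a • E0 p + b • E1 p + c • E2 p) = b := by
  simp [e1', E0, E1, E2]

theorem e2'_frame_sum (p : H3) (a b c : ℝ) : e2' p (a • E0 p + b • E1 p + c • E2 p) = c := by
  simp [e2', E0, E1, E2]

theorem e0'_nablaBar (X Y : H3 → H3) (p : H3) :
    e0' p (nablaBar X Y p) = fderiv ℝ (fun q => e0' q (Y q)) p (X p) :=
  e0'_frame_sum p _ _ _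

theorem e1'_nablaBar (X Y : H3 → H3) (p : H3) :
    e1' p (nablaBar X Y p) = fderiv ℝ (fun q => e1' q (Y q)) p (X p) :=
  e1'_frame_sum p _ _ _

theorem e2'_nablaBar (X Y : H3 → H3) (p : H3) :
    e2' p (nablaBar X Y p) = fderiv ℝ (fun q => e2' q (Y q)) p (X p) :=
  e2'_frame_sum p _ _ _

theorem f1'_sub_smul_eta (α : H3 → ℝ) (p v : H3) (c : ℝ) :
    f1' α p (v - c • eta α p) = f1' α p v := by
  simp only [f1', e1', e2', eta, E1, E2, Pi.sub_apply, Pi.add_apply, Pi.smul_apply, smul_eq_mul,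
    Matrix.cons_val]
  ring

theorem f2'_sub_smul_eta (α : H3 → ℝ) (p v : H3) (c : ℝ) :
    f2' p (v - c • eta α p) = f2' p v := by
  simp only [f2', e0', eta, E1, E2, Pi.sub_apply, Pi.add_apply, Pi.smul_apply, smul_eq_mul,
    Matrix.cons_val]
  ring

theorem differentiableAt_e1' (hZ : DifferentiableAt ℝ Z p) :
    DifferentiableAt ℝ (fun q => e1' q (Z q)) p :=
  differentiableAt_pi.1 hZ 0

theorem differentiableAt_e2' (hZ : DifferentiableAt ℝ Z p) :
    DifferentiableAt ℝ (fun q => e2' q (Z q)) p :=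
  differentiableAt_pi.1 hZ 1

theorem differentiableAt_f1' (hα : DifferentiableAt ℝ α p) (hZ : DifferentiableAt ℝ Z p) :
    DifferentiableAt ℝ (fun q => f1' α q (Z q)) p :=
  (hα.sin.neg.mul (differentiableAt_e1' hZ)).add (hα.cos.mul (differentiableAt_e2' hZ))

theorem differentiableAt_f2' (hZ : DifferentiableAt ℝ Z p) :
    DifferentiableAt ℝ (fun q => f2' q (Z q)) p := by
  have hZi := differentiableAt_pi.1 hZ
  unfold f2' e0'
  fun_prop

theorem fderiv_f1'_apply (A : H3 → ℝ) (X : H3 → H3) (hα : DifferentiableAt ℝ α p)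
    (hZ : DifferentiableAt ℝ Z p) :
    fderiv ℝ (fun q => f1' α q (Z q)) p (X p) =
      f1' α p (nablaP α A X Z p) - fderiv ℝ α p (X p) * etaFlat α p (Z p) := by
  have hf1 : HasFDerivAt (fun q => f1' α q (Z q)) _ p :=
    (hα.hasFDerivAt.sin.neg.mul (differentiableAt_e1' hZ).hasFDerivAt).add
      (hα.hasFDerivAt.cos.mul (differentiableAt_e2' hZ).hasFDerivAt)
  rw [hf1.fderiv, nablaP, f1'_sub_smul_eta]
  simp only [f1', etaFlat, e1'_nablaBar, e2'_nablaBar, add_apply, smul_apply, neg_apply,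
    Pi.neg_apply, smul_eq_mul]
  ring

theorem fderiv_f2'_apply (α A : H3 → ℝ) (X Z : H3 → H3) (p : H3) :
    fderiv ℝ (fun q => f2' q (Z q)) p (X p) = f2' p (nablaP α A X Z p) := by
  rw [nablaP, f2'_sub_smul_eta]
  exact (e0'_nablaBar X Z p).symm

theorem differentiableAt_fderiv_apply {𝕜 E F : Type*} [NontriviallyNormedField 𝕜]
    [NormedAddCommGroup E] [NormedSpace 𝕜 E] [NormedAddCommGroup F] [NormedSpace 𝕜 F]
    {g : E → F} {Y : E → E} {p : E} (hg : ContDiffAt 𝕜 2 g p) (hY : DifferentiableAt 𝕜 Y p) :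
    DifferentiableAt 𝕜 (fun q => fderiv 𝕜 g q (Y q)) p :=
  ((hg.fderiv_right (m := 1) le_rfl).differentiableAt one_ne_zero).clm_apply hY

theorem fderiv_secondFF_sub_secondFF_nablaP (X : H3 → H3)
    (hα : ContDiffAt ℝ 2 α p) (hA : ContDiffAt ℝ 2 A p)
    (hY : DifferentiableAt ℝ Y p) (hZ : DifferentiableAt ℝ Z p) :
    fderiv ℝ (fun q => secondFF α A q (Y q) (Z q)) p (X p)
        - secondFF α A p (Y p) (nablaP α A X Z p) =
      -fderiv ℝ (fun q => fderiv ℝ α q (Y q)) p (X p) * f1' α p (Z p)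
        + fderiv ℝ (fun q => fderiv ℝ A q (Y q)) p (X p) * f2' p (Z p)
        + fderiv ℝ α p (X p) * fderiv ℝ α p (Y p) * etaFlat α p (Z p) := by
  have hα' : DifferentiableAt ℝ α p := hα.differentiableAt two_ne_zero
  have hV : HasFDerivAt (fun q => secondFF α A q (Y q) (Z q)) _ p :=
    ((differentiableAt_fderiv_apply hα hY).hasFDerivAt.neg.mul
      (differentiableAt_f1' hα' hZ).hasFDerivAt).add
    ((differentiableAt_fderiv_apply hA hY).hasFDerivAt.mul (differentiableAt_f2' hZ).hasFDerivAt)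
  rw [hV.fderiv]
  simp only [secondFF, add_apply, smul_apply, neg_apply, Pi.neg_apply, smul_eq_mul,
    fderiv_f1'_apply A X hα' hZ, fderiv_f2'_apply α A X Z p]
  ring

theorem fderiv_apply_lie {F : Type*} [NormedAddCommGroup F] [NormedSpace ℝ F] {g : H3 → F}
    (hg : ContDiffAt ℝ 2 g p) (hX : DifferentiableAt ℝ X p) (hY : DifferentiableAt ℝ Y p) :
    fderiv ℝ g p (lie X Y p) =
      fderiv ℝ (fun q => fderiv ℝ g q (Y q)) p (X p)
        - fderiv ℝ (fun q => fderiv ℝ g q (X q)) p (Y p) :=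
  VectorField.fderiv_apply_lieBracket hg (by simp) hY hX

theorem secondFF_lie (hα : ContDiffAt ℝ 2 α p) (hA : ContDiffAt ℝ 2 A p)
    (hX : DifferentiableAt ℝ X p) (hY : DifferentiableAt ℝ Y p) (hZ : DifferentiableAt ℝ Z p) :
    secondFF α A p (lie X Y p) (Z p) =
      (fderiv ℝ (fun q => secondFF α A q (Y q) (Z q)) p (X p)
        - secondFF α A p (Y p) (nablaP α A X Z p))
      - (fderiv ℝ (fun q => secondFF α A q (X q) (Z q)) p (Y p)
        - secondFF α A p (X p) (nablaP α A Y Z p)) := by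
  rw [fderiv_secondFF_sub_secondFF_nablaP X hα hA hY hZ,
    fderiv_secondFF_sub_secondFF_nablaP Y hα hA hX hZ, secondFF,
    fderiv_apply_lie hα hX hY, fderiv_apply_lie hA hX hY]
  ring

theorem secondFF_sub_left (α A : H3 → ℝ) (p v v' w : H3) :
    secondFF α A p (v - v') w = secondFF α A p v w - secondFF α A p v' w := by
  simp only [secondFF, map_sub]
  ring

theorem codazzi_equation_general (hα : ContDiffAt ℝ 2 α p) (hA : ContDiffAt ℝ 2 A p)
    (hX : DifferentiableAt ℝ X p) (hY : DifferentiableAt ℝ Y p) (hZ : DifferentiableAt ℝ Z p) :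
    fderiv ℝ (fun q => secondFF α A q (Y q) (Z q)) p (X p)
        - secondFF α A p (nablaP α A X Y p) (Z p)
        - secondFF α A p (Y p) (nablaP α A X Z p)
        - fderiv ℝ (fun q => secondFF α A q (X q) (Z q)) p (Y p)
        + secondFF α A p (nablaP α A Y X p) (Z p)
        + secondFF α A p (X p) (nablaP α A Y Z p)
        + secondFF α A p (nablaP α A X Y p - nablaP α A Y X p - lie X Y p) (Z p)
      = 0 := by
  rw [secondFF_sub_left, secondFF_sub_left, secondFF_lie hα hA hX hY hZ]
  ring

end

/-- Codazzi equation: for tangent fields `X, Y, Z` with `[X,Y]` tangent,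
`∇_X V(Y,Z) − ∇_Y V(X,Z) + V(T(X,Y),Z) = 0`, written out with
`∇_X V(Y,Z) = X(V(Y,Z)) − V(∇_X Y,Z) − V(Y,∇_X Z)` and
`T(X,Y) = ∇_X Y − ∇_Y X − [X,Y]`. -/
theorem codazzi_equation (U : Set H3) (hU : IsOpen U) (α A : H3 → ℝ)
    (hα : ContDiffOn ℝ (⊤ : ℕ∞) α U) (hA : ContDiffOn ℝ (⊤ : ℕ∞) A U)
    (X Y Z : H3 → H3)
    (hX : ContDiffOn ℝ (⊤ : ℕ∞) X U) (hY : ContDiffOn ℝ (⊤ : ℕ∞) Y U) (hZ : ContDiffOn ℝ (⊤ : ℕ∞) Z U)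
    (hXtan : ∀ p ∈ U, etaStar α A p (X p) = 0)
    (hYtan : ∀ p ∈ U, etaStar α A p (Y p) = 0)
    (hZtan : ∀ p ∈ U, etaStar α A p (Z p) = 0)
    (hbtan : ∀ p ∈ U, etaStar α A p (lie X Y p) = 0) :
    ∀ p ∈ U,
      fderiv ℝ (fun q => secondFF α A q (Y q) (Z q)) p (X p)
        - secondFF α A p (nablaP α A X Y p) (Z p)
        - secondFF α A p (Y p) (nablaP α A X Z p)
        - fderiv ℝ (fun q => secondFF α A q (X q) (Z q)) p (Y p)
        + secondFF α A p (nablaP α A Y X p) (Z p)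
        + secondFF α A p (X p) (nablaP α A Y Z p)
        + secondFF α A p (nablaP α A X Y p - nablaP α A Y X p - lie X Y p) (Z p)
      = 0 := by
  intro p hp
  have hUp := hU.mem_nhds hp
  exact codazzi_equation_general
    (contDiffAt_infty.1 (hα.contDiffAt hUp) 2)
    (contDiffAt_infty.1 (hA.contDiffAt hUp) 2)
    ((hX.contDiffAt hUp).differentiableAt (by simp))
    ((hY.contDiffAt hUp).differentiableAt (by simp))
    ((hZ.contDiffAt hUp).differentiableAt (by simp))
end
end

section
/- Let γ : (a,b) → U be a smooth transverse tangent curve: η*_{γ(t)}(γ'(t)) = 0 and f²_{γ(t)}(γ'(t)) ≠ 0 for all t, with f²(γ') of constant sign, and let ε = +1 if f²(γ') < 0 and ε = −1 if f²(γ') > 0 (so that ε·f²(T) < 0). Let T(t) = γ'(t)/|f²_{γ(t)}(γ'(t))| be the unit tangent, define the adapted derivative of T along γ by ∇̄T/dt(t) = c₀'(t)e₀(γ(t)) + c₁'(t)e₁(γ(t)) + c₂'(t)e₂(γ(t)) where c₁(t) = T(t)₁, c₂(t) = T(t)₂, c₀(t) = e⁰_{γ(t)}(T(t)), let ∇T/dt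 = ∇̄T/dt − η*(∇̄T/dt)·η, and define the curvature k(t) = ε·f¹_{γ(t)}( (1/|f²_{γ(t)}(γ'(t))|)·∇T/dt(t) ). Then for all t: k(t) = (ε/f²_{γ(t)}(γ'(t)))·( d/dt[ f¹_{γ(t)}(γ'(t)) / f²_{γ(t)}(γ'(t)) ] + A(γ(t))·dα_{γ(t)}(γ'(t)) ). -/
open Real MeasureTheory

noncomputable section

/-- The unit tangent `T(t) = γ'(t)/|f²(γ'(t))|` along a transverse curve. -/
def Tcurve (γ : ℝ → H3) (s : ℝ) : H3 := (1 / |f2' (γ s) (deriv γ s)|) • deriv γ s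

/-- The adapted covariant derivative of `T` along `γ`:
`∇̄T/dt = c₀'·e₀ + c₁'·e₁ + c₂'·e₂` where `c₁ = T₁`, `c₂ = T₂`, `c₀ = e⁰(T)`. -/
def covTbar (γ : ℝ → H3) (s : ℝ) : H3 :=
  deriv (fun u => e0' (γ u) (Tcurve γ u)) s • E0 (γ s)
  + deriv (fun u => Tcurve γ u 0) s • E1 (γ s)
  + deriv (fun u => Tcurve γ u 1) s • E2 (γ s)

/-- The projection `∇T/dt = ∇̄T/dt − η*(∇̄T/dt)·η`. -/
def covTproj (α A : H3 → ℝ) (γ : ℝ → H3) (s : ℝ) : H3 :=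
  covTbar γ s - etaStar α A (γ s) (covTbar γ s) • eta α (γ s)

/-- The curvature `k(t) = ε·f¹( (1/|f²(γ')|)·∇T/dt )` of the transverse curve `γ`. -/
def kcurv (α A : H3 → ℝ) (γ : ℝ → H3) (ε t : ℝ) : ℝ :=
  ε * f1' α (γ t) ((1 / |f2' (γ t) (deriv γ t)|) • covTproj α A γ t)

/-!
The left invariant frame is `∇̄`-parallel, but `f¹` is built from it by a rotation of angle `α`, so
for a field `V` along `γ` the product rule gives
`f¹(∇̄V/dt) = d/dt f¹(V) + dα(γ')·(cos α · e¹(V) + sin α · e²(V))`.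
If `η*(V) = 0`, the last factor is `A·f²(V)`. For `V = T = γ'/|f²(γ')|` one has `f²(T) = σ` and
`f¹(T) = σ·f¹(γ')/f²(γ')` with `σ = sign f²(γ')` locally constant, and `σ/|f²(γ')| = 1/f²(γ')`. The
projection from `∇̄` to `∇` is invisible because `f¹(η) = 0`.
-/

theorem eventually_sign_eq {X R : Type*} [TopologicalSpace X] [Zero R] [LinearOrder R]
    [TopologicalSpace R] [OrderTopology R] {f : X → R} {x : X} (hf : ContinuousAt f x)
    (hx : f x ≠ 0) : ∀ᶠ y in nhds x, SignType.sign (f y) = SignType.sign (f x) := by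
  have hsign : Filter.Tendsto (fun y => SignType.sign (f y)) (nhds x)
      (nhds (SignType.sign (f x))) := (continuousAt_sign_of_ne_zero hx).tendsto.comp hf
  rwa [nhds_discrete SignType, Filter.tendsto_pure] at hsign

section Sign

variable {K : Type*} [Field K] [LinearOrder K] [IsStrictOrderedRing K]

theorem self_div_abs_eq_sign (x : K) : x / |x| = SignType.sign x := by
  rcases eq_or_ne x 0 with rfl | hx
  · simp
  · rw [div_eq_iff (abs_ne_zero.2 hx), sign_mul_abs]

theorem sign_div_abs_eq_inv (x : K) : SignType.sign x / |x| = x⁻¹ := by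
  rcases eq_or_ne x 0 with rfl | hx
  · simp
  · rw [div_eq_iff (abs_ne_zero.2 hx), ← sign_mul_self, mul_left_comm, inv_mul_cancel₀ hx, mul_one]

theorem sign_div_self_eq_inv_abs (x : K) : SignType.sign x / x = |x|⁻¹ := by
  rcases eq_or_ne x 0 with rfl | hx
  · simp
  · rw [div_eq_iff hx, inv_mul_eq_div, self_div_abs_eq_sign]

end Sign

section Coframe

variable (α : H3 → ℝ) (p : H3)

theorem f1'_smul (c : ℝ) (v : H3) : f1' α p (c • v) = c * f1' α p v := by
  simp only [f1', e1', e2', Pi.smul_apply, smul_eq_mul]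
  ring

theorem f1'_sub (v w : H3) : f1' α p (v - w) = f1' α p v - f1' α p w := by
  simp only [f1', e1', e2', Pi.sub_apply]
  ring

theorem f1'_eta : f1' α p (eta α p) = 0 := by
  simp only [f1', e1', e2', eta, E1, E2, Pi.add_apply, Pi.smul_apply, smul_eq_mul,
    Matrix.cons_val_zero, Matrix.cons_val_one]
  ring

theorem f2'_smul (c : ℝ) (v : H3) : f2' p (c • v) = c * f2' p v := by
  simp only [f2', e0', Pi.smul_apply, smul_eq_mul]
  ring

theorem etaStar_smul (A : H3 → ℝ) (c : ℝ) (v : H3) :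
    etaStar α A p (c • v) = c * etaStar α A p v := by
  simp only [etaStar, e0', e1', e2', Pi.smul_apply, smul_eq_mul]
  ring

end Coframe

theorem etaStar_eq_zero_iff {α A : H3 → ℝ} {p v : H3} :
    etaStar α A p v = 0 ↔ cos (α p) * e1' p v + sin (α p) * e2' p v = A p * f2' p v :=
  sub_eq_zero

/-- The adapted covariant derivative `∇̄V/dt` of a field `V` along a curve `γ`, in which the left
invariant frame is parallel. It extends `covTbar`, which is the case `V = T`. -/
def covDerivAlong (γ V : ℝ → H3) (t : ℝ) : H3 :=
  deriv (fun s => e0' (γ s) (V s)) t • E0 (γ t)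
  + deriv (fun s => e1' (γ s) (V s)) t • E1 (γ t)
  + deriv (fun s => e2' (γ s) (V s)) t • E2 (γ t)

theorem covTbar_eq_covDerivAlong (γ : ℝ → H3) (t : ℝ) :
    covTbar γ t = covDerivAlong γ (Tcurve γ) t :=
  rfl

section AlongCurve

variable {α A : H3 → ℝ} {γ V : ℝ → H3} {t : ℝ}

theorem e1'_covDerivAlong (p : H3) :
    e1' p (covDerivAlong γ V t) = deriv (fun s => e1' (γ s) (V s)) t := by
  simp [e1', covDerivAlong, E0, E1, E2]

theorem e2'_covDerivAlong (p : H3) :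
    e2' p (covDerivAlong γ V t) = deriv (fun s => e2' (γ s) (V s)) t := by
  simp [e2', covDerivAlong, E0, E1, E2]

theorem f1'_covTproj : f1' α (γ t) (covTproj α A γ t) = f1' α (γ t) (covTbar γ t) := by
  rw [covTproj, f1'_sub, f1'_smul, f1'_eta, mul_zero, sub_zero]

theorem differentiableAt_f2'_s19 (hγ : DifferentiableAt ℝ γ t) (hV : DifferentiableAt ℝ V t) :
    DifferentiableAt ℝ (fun s => f2' (γ s) (V s)) t := by
  unfold f2' e0'
  fun_prop

theorem f1'_covDerivAlong (hα : DifferentiableAt ℝ α (γ t)) (hγ : DifferentiableAt ℝ γ t)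
    (hV : DifferentiableAt ℝ V t) :
    f1' α (γ t) (covDerivAlong γ V t) =
      deriv (fun s => f1' α (γ s) (V s)) t
        + (cos (α (γ t)) * e1' (γ t) (V t) + sin (α (γ t)) * e2' (γ t) (V t))
          * fderiv ℝ α (γ t) (deriv γ t) := by
  have hαγ : HasDerivAt (fun s => α (γ s)) (fderiv ℝ α (γ t) (deriv γ t)) t :=
    hα.hasFDerivAt.comp_hasDerivAt t hγ.hasDerivAt
  have h₁ : HasDerivAt (fun s => e1' (γ s) (V s)) (deriv (fun s => e1' (γ s) (V s)) t) t :=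
    (differentiableAt_pi.1 hV 0).hasDerivAt
  have h₂ : HasDerivAt (fun s => e2' (γ s) (V s)) (deriv (fun s => e2' (γ s) (V s)) t) t :=
    (differentiableAt_pi.1 hV 1).hasDerivAt
  have hf₁ : deriv (fun s => f1' α (γ s) (V s)) t =
      -(cos (α (γ t)) * fderiv ℝ α (γ t) (deriv γ t)) * e1' (γ t) (V t)
        + -sin (α (γ t)) * deriv (fun s => e1' (γ s) (V s)) t
        + (-sin (α (γ t)) * fderiv ℝ α (γ t) (deriv γ t) * e2' (γ t) (V t)
          + cos (α (γ t)) * deriv (fun s => e2' (γ s) (V s)) t) :=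
    ((hαγ.sin.fun_neg.fun_mul h₁).fun_add (hαγ.cos.fun_mul h₂)).deriv
  rw [hf₁, f1', e1'_covDerivAlong, e2'_covDerivAlong]
  ring

theorem f1'_covDerivAlong_of_etaStar_eq_zero (hα : DifferentiableAt ℝ α (γ t))
    (hγ : DifferentiableAt ℝ γ t) (hV : DifferentiableAt ℝ V t)
    (htan : etaStar α A (γ t) (V t) = 0) :
    f1' α (γ t) (covDerivAlong γ V t) =
      deriv (fun s => f1' α (γ s) (V s)) t
        + A (γ t) * f2' (γ t) (V t) * fderiv ℝ α (γ t) (deriv γ t) := by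
  rw [f1'_covDerivAlong hα hγ hV, etaStar_eq_zero_iff.1 htan]

end AlongCurve

section UnitTangent

variable {α A : H3 → ℝ} {γ : ℝ → H3} {t : ℝ}

theorem f2'_Tcurve (γ : ℝ → H3) (t : ℝ) :
    f2' (γ t) (Tcurve γ t) = SignType.sign (f2' (γ t) (deriv γ t)) := by
  rw [Tcurve, f2'_smul, one_div_mul_eq_div, self_div_abs_eq_sign]

theorem f1'_Tcurve (α : H3 → ℝ) (γ : ℝ → H3) (t : ℝ) :
    f1' α (γ t) (Tcurve γ t) = SignType.sign (f2' (γ t) (deriv γ t))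
      * (f1' α (γ t) (deriv γ t) / f2' (γ t) (deriv γ t)) := by
  rw [Tcurve, f1'_smul, one_div, ← sign_div_self_eq_inv_abs, div_mul_eq_mul_div, mul_div_assoc]

theorem etaStar_Tcurve (htan : etaStar α A (γ t) (deriv γ t) = 0) :
    etaStar α A (γ t) (Tcurve γ t) = 0 := by
  rw [Tcurve, etaStar_smul, htan, mul_zero]

theorem differentiableAt_Tcurve (hγ : DifferentiableAt ℝ γ t)
    (hγ' : DifferentiableAt ℝ (deriv γ) t) (h : f2' (γ t) (deriv γ t) ≠ 0) :
    DifferentiableAt ℝ (Tcurve γ) t :=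
  ((differentiableAt_const 1).div ((differentiableAt_f2'_s19 hγ hγ').abs h) (abs_ne_zero.2 h)).smul hγ'

theorem deriv_f1'_Tcurve (α : H3 → ℝ) (hγ : DifferentiableAt ℝ γ t)
    (hγ' : DifferentiableAt ℝ (deriv γ) t) (h : f2' (γ t) (deriv γ t) ≠ 0) :
    deriv (fun s => f1' α (γ s) (Tcurve γ s)) t = SignType.sign (f2' (γ t) (deriv γ t))
      * deriv (fun s => f1' α (γ s) (deriv γ s) / f2' (γ s) (deriv γ s)) t := by
  have hsign := eventually_sign_eq (differentiableAt_f2'_s19 hγ hγ').continuousAt h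
  rw [← deriv_const_mul_field]
  refine Filter.EventuallyEq.deriv_eq ?_
  filter_upwards [hsign] with s hs
  rw [f1'_Tcurve, hs]

end UnitTangent

theorem curvature_of_transverse_curve_general {α A : H3 → ℝ} {γ : ℝ → H3} {t : ℝ}
    (hα : DifferentiableAt ℝ α (γ t)) (hγ : DifferentiableAt ℝ γ t)
    (hγ' : DifferentiableAt ℝ (deriv γ) t) (htan : etaStar α A (γ t) (deriv γ t) = 0)
    (htrans : f2' (γ t) (deriv γ t) ≠ 0) (ε : ℝ) :
    kcurv α A γ ε t =
      (ε / f2' (γ t) (deriv γ t)) *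
        (deriv (fun s => f1' α (γ s) (deriv γ s) / f2' (γ s) (deriv γ s)) t
          + A (γ t) * fderiv ℝ α (γ t) (deriv γ t)) := by
  have hcov : f1' α (γ t) (covTproj α A γ t) = SignType.sign (f2' (γ t) (deriv γ t))
      * (deriv (fun s => f1' α (γ s) (deriv γ s) / f2' (γ s) (deriv γ s)) t
        + A (γ t) * fderiv ℝ α (γ t) (deriv γ t)) := by
    rw [f1'_covTproj, covTbar_eq_covDerivAlong,
      f1'_covDerivAlong_of_etaStar_eq_zero hα hγ (differentiableAt_Tcurve hγ hγ' htrans)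
        (etaStar_Tcurve htan),
      deriv_f1'_Tcurve α hγ hγ' htrans, f2'_Tcurve]
    ring
  rw [kcurv, f1'_smul, hcov, ← mul_assoc (1 / |_|), one_div_mul_eq_div, sign_div_abs_eq_inv,
    ← mul_assoc, ← div_eq_mul_inv]

/-- Formula for the curvature of a transverse tangent curve:
`k = (ε/f²(γ'))·( d/dt(f¹(γ')/f²(γ')) + A·dα(γ') )`. -/
theorem curvature_of_transverse_curve (U : Set H3) (hU : IsOpen U) (α A : H3 → ℝ)
    (hα : ContDiffOn ℝ (⊤ : ℕ∞) α U) (hA : ContDiffOn ℝ (⊤ : ℕ∞) A U)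
    (a b : ℝ) (γ : ℝ → H3) (hγ : ContDiffOn ℝ (⊤ : ℕ∞) γ (Set.Ioo a b))
    (hγU : ∀ t ∈ Set.Ioo a b, γ t ∈ U)
    (htan : ∀ t ∈ Set.Ioo a b, etaStar α A (γ t) (deriv γ t) = 0)
    (ε : ℝ) (hε : ε = 1 ∨ ε = -1)
    (hsign : ∀ t ∈ Set.Ioo a b, ε * f2' (γ t) (deriv γ t) < 0) :
    ∀ t ∈ Set.Ioo a b,
      kcurv α A γ ε t
        = (ε / f2' (γ t) (deriv γ t)) *
            (deriv (fun s => f1' α (γ s) (deriv γ s) / f2' (γ s) (deriv γ s)) t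
              + A (γ t) * fderiv ℝ α (γ t) (deriv γ t)) := by
  intro t ht
  have hI : Set.Ioo a b ∈ nhds t := isOpen_Ioo.mem_nhds ht
  exact curvature_of_transverse_curve_general
    ((hα.contDiffAt (hU.mem_nhds (hγU t ht))).differentiableAt (by simp))
    ((hγ.contDiffAt hI).differentiableAt (by simp))
    (((hγ.deriv_of_isOpen (m := 1) isOpen_Ioo (by norm_cast)).contDiffAt hI).differentiableAt
      one_ne_zero)
    (htan t ht) (right_ne_zero_of_mul (hsign t ht).ne) ε
end
end
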